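/- Let (α₀, α₁, β₀, β₁, γ₀, γ₁) ∈ ℝ⁶ be not all zero and define on (−1/4, 0) the pair of functions M₂(h) = (α₀+α₁h)·I₀(h) + (β₀+β₁h)·I₁(h) + (γ₀+γ₁h)·I₂(h) and M₂*(h) = (α₀+α₁h)·I₀(h) − (β₀+β₁h)·I₁(h) + (γ₀+γ₁h)·I₂(h). Then: (i) the total number of elements of {h : M₂(h)=0} and {h : M₂*(h)=0} in (−1/4, 0) is at most 9; (ii) if in addition β₁ = 0, this total is at most 7; (iii) if β₀ = β₁ = 0, then M₂ = M₂* and its zero set in (−1/4,0) has at most 3 elements, so the total is at most 6. -/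

import Mathlib

/-!
Put `s = 1 + 4h ∈ (0, 1)`. The substitution `x = √(1 + √s cos θ)` gives
`I_k = (s / √2) ∫₀^π (1 + √s cos θ)^((k-1)/2) sin² θ dθ`, so `I₁` is a positive multiple of `s`,
and the binomial series turns `I₀ / I₁` and `I₂ / I₁` into the hypergeometric series with
coefficients `p n` and `q n = -p n / (4n - 1)` (`exists_AbI`). Hence `M₂ = 0` and `M₂* = 0` become
`G(s) = -(b₀ + b₁ s)` and `G(s) = b₀ + b₁ s`, where `G` has coefficients
`g n = w n * C(n) / (n - 5/4)` with `w n = p n / ((4n - 1)(4n - 3)) > 0` and a cubic `C` depending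
linearly and injectively on the `α`s and `γ`s.

The core is that `G`, `G'` and `G''` have at most three zeros in `(0, 1)` each. By Rolle's theorem
for `s^(-r) G`, multiplying the coefficients by `n - r` loses at most one zero
(`ZerosLE.of_sub_mul`). Taking for `r` a root of `C` squares this root, so a series with
coefficients (nonnegative weight) times (cubic) has at most three zeros
(`zerosLE_weight_mul_eval`). This covers `G''`, whose factors `n (n - 1)` remove the indices where
`n - 5/4 < 0`. For `G` and `G'` the factor `1 / (n - 5/4)` changes sign between `1` and `2`; it can
be cancelled at the cost of one zero, or be paired with a root in `[1, 2]`, or be compensated by two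
roots in `(0, 1)`, between which no coefficient lies. Roots that are nonpositive need not be squared,
and a quadratic factor without real roots costs nothing. What remains is that all roots of `C` lie
above `2`, or one lies in `(0, 1)` and two above `2`; then squaring all but one root leaves a series
whose first two terms dominate its tail, by the decay of `w` (`zerosLE_three`).

Counting is then Rolle's theorem again. If `f` and `f'` have at most three zeros, then each level of
`f` has at most four points, and two opposite levels cannot both have four (`not_four_and_four`).
Applied to `G` this gives the bound `7` for `b₁ = 0`. Applied to `G'` it says that one of
`(G ± b₁ s)'` has at most three zeros and the other at most four, which gives `5 + 4 = 9`. When all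
`α` and `γ` vanish, the zeros are those of a nonzero affine function.
-/

open Set

/-- Lower endpoint of the oval projection: `x₋(h) = √(1 − √(1+4h))`. -/
noncomputable def xminus (h : ℝ) : ℝ := Real.sqrt (1 - Real.sqrt (1 + 4*h))

/-- Upper endpoint of the oval projection: `x₊(h) = √(1 + √(1+4h))`. -/
noncomputable def xplus (h : ℝ) : ℝ := Real.sqrt (1 + Real.sqrt (1 + 4*h))

/-- The Abelian integral `I_k(h) = 2∫_{x₋(h)}^{x₊(h)} x^k √(2h + x² − x⁴/2) dx`. -/
noncomputable def AbI (k : ℕ) (h : ℝ) : ℝ :=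
  2 * ∫ x in (xminus h)..(xplus h), x ^ k * Real.sqrt (2*h + x^2 - x^4/2)
/-- The second Melnikov function of the annulus around `(1,0)`. -/
noncomputable def M2 (α₀ α₁ β₀ β₁ γ₀ γ₁ : ℝ) (h : ℝ) : ℝ :=
  (α₀ + α₁*h) * AbI 0 h + (β₀ + β₁*h) * AbI 1 h + (γ₀ + γ₁*h) * AbI 2 h

/-- The second Melnikov function of the annulus around `(−1,0)`. -/
noncomputable def M2star (α₀ α₁ β₀ β₁ γ₀ γ₁ : ℝ) (h : ℝ) : ℝ :=
  (α₀ + α₁*h) * AbI 0 h - (β₀ + β₁*h) * AbI 1 h + (γ₀ + γ₁*h) * AbI 2 h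

namespace Duffing

/-! ### Counting zeros on `(0, 1)` -/

lemma exists_strictMono_of_le_encard {S : Set ℝ} {n : ℕ} (h : (n : ℕ∞) ≤ S.encard) :
    ∃ x : Fin n → ℝ, StrictMono x ∧ ∀ i, x i ∈ S := by
  obtain ⟨t, htS, ht⟩ := Set.exists_subset_encard_eq h
  have hfin : t.Finite := Set.finite_of_encard_eq_coe ht
  have hcard : hfin.toFinset.card = n := by
    have := hfin.encard_eq_coe_toFinset_card
    rw [ht] at this
    exact_mod_cast this.symm
  refine ⟨hfin.toFinset.orderEmbOfFin hcard, (hfin.toFinset.orderEmbOfFin hcard).strictMono,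
    fun i => htS ?_⟩
  exact hfin.mem_toFinset.1 (hfin.toFinset.orderEmbOfFin_mem hcard i)

lemma encard_range_of_strictMono {n : ℕ} {x : Fin n → ℝ} (hx : StrictMono x) :
    (range x).encard = n := by
  rw [← Set.image_univ, hx.injective.injOn.encard_image]
  simp [Set.encard_univ]

lemma le_encard_of_strictMono {S : Set ℝ} {n : ℕ} {x : Fin n → ℝ} (hx : StrictMono x)
    (h : ∀ i, x i ∈ S) : (n : ℕ∞) ≤ S.encard := by
  rw [← encard_range_of_strictMono hx]
  exact Set.encard_le_encard (Set.range_subset_iff.2 h)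

/-- Rolle's theorem between consecutive points of a level set. -/
lemma exists_interlacing {f f' : ℝ → ℝ} (hf : ∀ s ∈ Ioo (0 : ℝ) 1, HasDerivAt f (f' s) s)
    {b : ℝ} {n : ℕ} {x : Fin (n + 1) → ℝ} (hx : StrictMono x)
    (hxS : ∀ i, x i ∈ Ioo (0 : ℝ) 1 ∧ f (x i) = b) :
    ∃ c : Fin n → ℝ, StrictMono c ∧ (∀ i, c i ∈ {s ∈ Ioo (0 : ℝ) 1 | f' s = 0}) ∧
      ∀ i : Fin n, c i ∈ Ioo (x i.castSucc) (x i.succ) := by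
  have key : ∀ i : Fin n, ∃ c ∈ Ioo (x i.castSucc) (x i.succ), f' c = 0 := by
    intro i
    have hsub : Icc (x i.castSucc) (x i.succ) ⊆ Ioo (0 : ℝ) 1 := fun y hy =>
      ⟨(hxS _).1.1.trans_le hy.1, hy.2.trans_lt (hxS _).1.2⟩
    refine exists_hasDerivAt_eq_zero (hx i.castSucc_lt_succ)
      (fun y hy => (hf y (hsub hy)).continuousAt.continuousWithinAt) ?_
      (fun y hy => hf y (hsub (Ioo_subset_Icc_self hy)))
    rw [(hxS _).2, (hxS _).2]
  choose c hc hc0 using key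
  refine ⟨c, ?_, fun i => ⟨⟨(hxS _).1.1.trans (hc i).1, (hc i).2.trans (hxS _).1.2⟩, hc0 i⟩, hc⟩
  intro i j hij
  refine (hc i).2.trans_le (le_trans (hx.monotone ?_) (hc j).1.le)
  rw [Fin.le_def]
  simpa using hij

lemma encard_level_le {f f' : ℝ → ℝ} (hf : ∀ s ∈ Ioo (0 : ℝ) 1, HasDerivAt f (f' s) s)
    (b : ℝ) {d : ℕ} (h : {s ∈ Ioo (0 : ℝ) 1 | f' s = 0}.encard ≤ d) :
    {s ∈ Ioo (0 : ℝ) 1 | f s = b}.encard ≤ (d + 1 : ℕ) := by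
  by_contra hcon
  have h2 : ((d + 2 : ℕ) : ℕ∞) ≤ {s ∈ Ioo (0 : ℝ) 1 | f s = b}.encard := by
    have := Order.add_one_le_of_lt (not_le.1 hcon)
    exact_mod_cast this
  obtain ⟨x, hx, hxS⟩ := exists_strictMono_of_le_encard h2
  obtain ⟨c, hc, hcS, -⟩ := exists_interlacing hf hx hxS
  have := (le_encard_of_strictMono hc hcS).trans h
  have h3 : d + 1 ≤ d := by exact_mod_cast this
  omega

/-- If `f` and `f'` both have at most three zeros, then `f` cannot take both values `b` and `-b`
four times: the three critical points would separate the eight points into four pairs, and `f`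
would vanish between the members of each pair. -/
lemma not_four_and_four {f f' : ℝ → ℝ} (hf : ∀ s ∈ Ioo (0 : ℝ) 1, HasDerivAt f (f' s) s)
    {b : ℝ} (h' : {s ∈ Ioo (0 : ℝ) 1 | f' s = 0}.encard ≤ 3)
    (h0 : {s ∈ Ioo (0 : ℝ) 1 | f s = 0}.encard ≤ 3) :
    ¬ ((4 : ℕ∞) ≤ {s ∈ Ioo (0 : ℝ) 1 | f s = b}.encard ∧
      (4 : ℕ∞) ≤ {s ∈ Ioo (0 : ℝ) 1 | f s = -b}.encard) := by
  rintro ⟨h1, h2⟩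
  obtain ⟨x, hx, hxS⟩ := exists_strictMono_of_le_encard (n := 4) h1
  obtain ⟨y, hy, hyS⟩ := exists_strictMono_of_le_encard (n := 4) h2
  obtain ⟨c, hc, hcS, hcx⟩ := exists_interlacing hf hx hxS
  obtain ⟨e, he, heS, hey⟩ := exists_interlacing hf hy hyS
  have hrange : ∀ {c : Fin 3 → ℝ}, StrictMono c →
      (∀ i, c i ∈ {s ∈ Ioo (0 : ℝ) 1 | f' s = 0}) →
      range c = {s ∈ Ioo (0 : ℝ) 1 | f' s = 0} := by
    intro c hc hcS
    refine (Set.finite_range c).eq_of_subset_of_encard_le (Set.range_subset_iff.2 hcS) ?_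
    rw [encard_range_of_strictMono hc]
    exact h'
  have hce : e = c := (he.range_inj hc).1 ((hrange he heS).trans (hrange hc hcS).symm)
  subst hce
  have key : ∀ i : Fin 4, ∃ z ∈ uIcc (x i) (y i), f z = 0 := by
    intro i
    have hsub : uIcc (x i) (y i) ⊆ Ioo (0 : ℝ) 1 :=
      Set.OrdConnected.uIcc_subset inferInstance (hxS i).1 (hyS i).1
    have hcont : ContinuousOn f (uIcc (x i) (y i)) := fun t ht =>
      (hf t (hsub ht)).continuousAt.continuousWithinAt
    have := intermediate_value_uIcc hcont
    refine this ?_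
    rw [(hxS i).2, (hyS i).2, Set.mem_uIcc]
    rcases le_total 0 b with hb | hb
    · right; constructor <;> linarith
    · left; constructor <;> linarith
  choose z hz hz0 using key
  have hzS : ∀ i, z i ∈ {s ∈ Ioo (0 : ℝ) 1 | f s = 0} := fun i =>
    ⟨Set.OrdConnected.uIcc_subset inferInstance (hxS i).1 (hyS i).1 (hz i), hz0 i⟩
  have hzmono : StrictMono z := by
    refine Fin.strictMono_iff_lt_succ.2 fun i => ?_
    have a1 : z i.castSucc < e i :=
      (Set.mem_uIcc.1 (hz i.castSucc)).elim (fun h => h.2.trans_lt (hey i).1)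
        (fun h => h.2.trans_lt (hcx i).1)
    have a2 : e i < z i.succ :=
      (Set.mem_uIcc.1 (hz i.succ)).elim (fun h => (hcx i).2.trans_le h.1)
        (fun h => (hey i).2.trans_le h.1)
    exact a1.trans a2
  have := (le_encard_of_strictMono hzmono hzS).trans h0
  have h3 : (4 : ℕ) ≤ 3 := by exact_mod_cast this
  omega

/-! ### Power series with coefficients of polynomial growth -/

/-- Sequences of at most polynomial growth. -/
def PolyGrowth (f : ℕ → ℝ) : Prop := ∃ k : ℕ, f =O[Filter.atTop] fun n : ℕ => (n : ℝ) ^ k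

/-- The sum of the power series with coefficients `f`. -/
noncomputable def ser (f : ℕ → ℝ) (s : ℝ) : ℝ := ∑' n, f n * s ^ n

/-- `ser f` has at most `d` zeros in `(0, 1)`. -/
def ZerosLE (f : ℕ → ℝ) (d : ℕ) : Prop := {s ∈ Ioo (0 : ℝ) 1 | ser f s = 0}.encard ≤ d

lemma PolyGrowth.mul {f g : ℕ → ℝ} (hf : PolyGrowth f) (hg : PolyGrowth g) :
    PolyGrowth fun n => f n * g n := by
  obtain ⟨k, hk⟩ := hf
  obtain ⟨l, hl⟩ := hg
  refine ⟨k + l, ?_⟩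
  simpa only [pow_add] using hk.mul hl

lemma polyGrowth_eval (C : Polynomial ℝ) : PolyGrowth fun n => C.eval (n : ℝ) := by
  refine ⟨C.natDegree, ?_⟩
  have := Polynomial.isBigO_atTop_of_degree_le C (Polynomial.X ^ C.natDegree) (by
    rw [Polynomial.degree_X_pow]; exact Polynomial.degree_le_natDegree)
  have h2 := this.comp_tendsto tendsto_natCast_atTop_atTop
  simpa [Function.comp_def] using h2

lemma polyGrowth_of_bounded {f : ℕ → ℝ} (K : ℝ) (h : ∀ n, |f n| ≤ K) : PolyGrowth f :=
  ⟨0, Asymptotics.IsBigO.of_bound K (Filter.Eventually.of_forall fun n => by simpa using h n)⟩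

lemma PolyGrowth.sub_mul {f : ℕ → ℝ} (hf : PolyGrowth f) (r : ℝ) :
    PolyGrowth fun n => ((n : ℝ) - r) * f n := by
  have := (polyGrowth_eval (Polynomial.X - Polynomial.C r)).mul hf
  simpa using this

lemma PolyGrowth.summable {f : ℕ → ℝ} (hf : PolyGrowth f) {s : ℝ} (hs : |s| < 1) :
    Summable fun n => f n * s ^ n := by
  obtain ⟨k, hk⟩ := hf
  have h1 := summable_pow_mul_geometric_of_norm_lt_one (R := ℝ) k (r := |s|) (by simpa using hs)
  refine summable_of_isBigO_nat h1 ?_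
  have h2 : (fun n : ℕ => s ^ n) =O[Filter.atTop] fun n : ℕ => |s| ^ n :=
    Asymptotics.IsBigO.of_bound 1 (Filter.Eventually.of_forall fun n => by simp)
  exact hk.mul h2

lemma PolyGrowth.hasSum {f : ℕ → ℝ} (hf : PolyGrowth f) {s : ℝ} (hs : s ∈ Ioo (0 : ℝ) 1) :
    HasSum (fun n => f n * s ^ n) (ser f s) :=
  (hf.summable (by rw [abs_of_pos hs.1]; exact hs.2)).hasSum

/-- Termwise differentiation, in terms of the Euler operator `s d/ds`. -/
lemma PolyGrowth.hasDerivAt {f : ℕ → ℝ} (hf : PolyGrowth f) {s : ℝ} (hs : s ∈ Ioo (0 : ℝ) 1) :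
    HasDerivAt (ser f) (ser (fun n => (n : ℝ) * f n) s / s) s := by
  obtain ⟨hs0, hs1⟩ := hs
  have hnf : PolyGrowth fun n => (n : ℝ) * f n := by simpa using hf.sub_mul 0
  set r : ℝ := (s + 1) / 2 with hr
  have hr0 : 0 < r := by linarith
  have hr1 : r < 1 := by linarith
  have hu : Summable fun n : ℕ => |(n : ℝ) * f n * r ^ n| / r :=
    (hnf.summable (by rwa [abs_of_pos hr0])).abs.div_const r
  have hd := hasDerivAt_tsum_of_isPreconnected (g := fun n y => f n * y ^ n)
    (g' := fun n y => f n * ((n : ℝ) * y ^ (n - 1))) (t := Ioo 0 r) (y₀ := s) (y := s) hu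
    isOpen_Ioo isPreconnected_Ioo (fun n y _ => (hasDerivAt_pow n y).const_mul (f n)) ?_
    ⟨hs0, by linarith⟩ (hf.summable (by rwa [abs_of_pos hs0])) ⟨hs0, by linarith⟩
  · refine (hd : HasDerivAt (ser f) _ s).congr_deriv ?_
    rw [ser, ← tsum_div_const]
    refine tsum_congr fun n => ?_
    rcases n with _ | n
    · simp
    · field_simp
      simp only [Nat.add_sub_cancel]
      ring
  · intro n y hy
    rcases n with _ | n
    · simp
    · rw [Real.norm_eq_abs, le_div_iff₀ hr0, Nat.add_sub_cancel]
      have : |f (n + 1) * (((n + 1 : ℕ) : ℝ) * y ^ n)| = |((n + 1 : ℕ) : ℝ) * f (n + 1)| * y ^ n := by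
        rw [abs_mul, abs_mul, abs_mul, abs_of_nonneg (pow_nonneg hy.1.le n)]; ring
      rw [this, abs_mul (((n + 1 : ℕ) : ℝ) * f (n + 1)) (r ^ (n + 1)),
        abs_of_nonneg (pow_nonneg hr0.le (n + 1)), pow_succ, ← mul_assoc]
      gcongr
      · exact hy.1.le
      · exact hy.2.le

/-- Rolle's theorem for `s ^ (-r) * ser f s`: multiplying the `n`-th coefficient by `n - r` loses
at most one zero. -/
lemma ZerosLE.of_sub_mul {f : ℕ → ℝ} (hf : PolyGrowth f) (r : ℝ) {d : ℕ}
    (h : ZerosLE (fun n => ((n : ℝ) - r) * f n) d) : ZerosLE f (d + 1) := by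
  have hnf : PolyGrowth fun n => (n : ℝ) * f n := by simpa using hf.sub_mul 0
  have hser : ∀ s ∈ Ioo (0 : ℝ) 1, ser (fun n => ((n : ℝ) - r) * f n) s =
      ser (fun n => (n : ℝ) * f n) s - r * ser f s := by
    intro s hs
    have := (hnf.hasSum hs).sub ((hf.hasSum hs).mul_left r)
    rw [← this.tsum_eq, ser]
    exact tsum_congr fun n => by ring
  have hd : ∀ s ∈ Ioo (0 : ℝ) 1, HasDerivAt (fun s => s ^ (-r) * ser f s)
      (s ^ (-r - 1) * ser (fun n => ((n : ℝ) - r) * f n) s) s := by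
    intro s hs
    have h1 := (Real.hasDerivAt_rpow_const (x := s) (p := -r) (Or.inl hs.1.ne')).mul
      (hf.hasDerivAt hs)
    refine h1.congr_deriv ?_
    have hs0 := hs.1.ne'
    rw [hser s hs, Real.rpow_sub_one hs0]
    field_simp
    ring
  have := encard_level_le hd 0 (d := d) ?_
  · refine le_trans (Set.encard_le_encard ?_) this
    rintro s ⟨hs, hs0⟩
    exact ⟨hs, by simp [hs0]⟩
  · refine le_trans (Set.encard_le_encard ?_) h
    rintro s ⟨hs, hs0⟩
    exact ⟨hs, (mul_eq_zero.1 hs0).resolve_left (Real.rpow_pos_of_pos hs.1 _).ne'⟩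

lemma ZerosLE.mono {f : ℕ → ℝ} {d d' : ℕ} (h : ZerosLE f d) (hd : d ≤ d') : ZerosLE f d' :=
  le_trans h (by exact_mod_cast hd)

lemma zerosLE_zero_of_ne {f : ℕ → ℝ} (h : ∀ s ∈ Ioo (0 : ℝ) 1, ser f s ≠ 0) : ZerosLE f 0 := by
  have : {s ∈ Ioo (0 : ℝ) 1 | ser f s = 0} = ∅ := by
    ext s; exact ⟨fun hs => h s hs.1 hs.2, fun hs => hs.elim⟩
  rw [ZerosLE, this]
  simp

/-- Coefficients of one sign: no zeros. -/
lemma zerosLE_zero_of_nonneg {f : ℕ → ℝ} (hf : PolyGrowth f) (h : ∀ n, 0 ≤ f n)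
    (hpos : ∃ n, f n ≠ 0) : ZerosLE f 0 := by
  refine zerosLE_zero_of_ne fun s hs => ?_
  obtain ⟨m, hm⟩ := hpos
  refine ((hf.summable (by rw [abs_of_pos hs.1]; exact hs.2)).tsum_pos
    (fun n => mul_nonneg (h n) (pow_nonneg hs.1.le n)) m ?_).ne'
  exact mul_pos (lt_of_le_of_ne (h m) hm.symm) (pow_pos hs.1 m)

lemma zerosLE_const_mul {f : ℕ → ℝ} {c : ℝ} (hc : c ≠ 0) {d : ℕ} (h : ZerosLE f d) :
    ZerosLE (fun n => c * f n) d := by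
  refine le_trans (Set.encard_le_encard ?_) h
  rintro s ⟨hs, hs0⟩
  refine ⟨hs, ?_⟩
  simp only [ser, mul_assoc, tsum_mul_left] at hs0
  exact (mul_eq_zero.1 hs0).resolve_left hc

lemma zerosLE_zero_of_nonpos {f : ℕ → ℝ} (hf : PolyGrowth f) (h : ∀ n, f n ≤ 0)
    (hpos : ∃ n, f n ≠ 0) : ZerosLE f 0 := by
  have := zerosLE_const_mul (f := fun n => -1 * f n) (c := -1) (d := 0) (by norm_num)
    (zerosLE_zero_of_nonneg ((polyGrowth_of_bounded (f := fun _ => -1) 1 (by simp)).mul hf)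
      (fun n => by linarith [h n]) (by obtain ⟨n, hn⟩ := hpos; exact ⟨n, by simpa using hn⟩))
  simpa using this

/-- A leading part `f 0 + f 1 s` dominating a telescoping lower bound of the tail. -/
lemma zerosLE_zero_of_dominated {f : ℕ → ℝ} (hf : PolyGrowth f) {D : ℝ} (hD : 0 ≤ D)
    (h0 : 0 ≤ f 0) (h01 : D < f 0 + f 1)
    (h : ∀ n : ℕ, 2 ≤ n → -(D / (n * (n - 1))) ≤ f n) : ZerosLE f 0 := by
  refine zerosLE_zero_of_ne fun s hs => ?_
  have hsum := (hf.hasSum hs).tendsto_sum_nat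
  have hlow : ∀ N : ℕ, f 0 + f 1 * s - s * (D * (1 - 1 / ((N : ℝ) + 1))) ≤
      ∑ n ∈ Finset.range (N + 2), f n * s ^ n := by
    intro N
    induction N with
    | zero => simp [Finset.sum_range_succ]
    | succ N ih =>
      rw [Finset.sum_range_succ]
      have h2 := h (N + 2) (by omega)
      push_cast at h2 ⊢
      have hN : (0 : ℝ) ≤ N := Nat.cast_nonneg N
      have h3 : s ^ (N + 2) ≤ s := by
        simpa using pow_le_pow_of_le_one hs.1.le hs.2.le (show 1 ≤ N + 2 by omega)
      have hq : (0 : ℝ) ≤ D / ((N + 2) * (N + 2 - 1)) :=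
        div_nonneg hD (mul_nonneg (by linarith) (by linarith))
      have h4 : -(D / ((N + 2) * (N + 2 - 1))) * s ≤ f (N + 2) * s ^ (N + 2) := by
        have : -(D / (((N : ℝ) + 2) * (N + 2 - 1))) * s ^ (N + 2) ≤ f (N + 2) * s ^ (N + 2) :=
          mul_le_mul_of_nonneg_right h2 (pow_nonneg hs.1.le _)
        nlinarith
      have h5 : D / (((N : ℝ) + 2) * (N + 2 - 1)) = D * (1 / ((N : ℝ) + 1) - 1 / (N + 1 + 1)) := by
        have e1 : (N : ℝ) + 1 ≠ 0 := by positivity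
        have e2 : (N : ℝ) + 2 ≠ 0 := by positivity
        have e3 : (N : ℝ) + 2 - 1 = N + 1 := by ring
        have e4 : (N : ℝ) + 1 + 1 = N + 2 := by ring
        rw [e3, e4]
        field_simp
        ring
      rw [h5] at h4
      linarith
  have hge : f 0 + f 1 * s - s * D ≤ ser f s := by
    refine ge_of_tendsto (hsum.comp (Filter.tendsto_add_atTop_nat 2))
      (Filter.Eventually.of_forall fun N => le_trans ?_ (hlow N))
    have : 0 ≤ 1 / ((N : ℝ) + 1) := by positivity
    have := mul_nonneg (mul_nonneg hs.1.le hD) this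
    linarith
  have : 0 < ser f s := by
    have h1 : f 0 * s ≤ f 0 := by nlinarith [hs.2]
    have h2 : 0 < s * (f 0 + f 1 - D) := mul_pos hs.1 (by linarith)
    nlinarith
  exact this.ne'

/-! ### Descartes' rule for weighted polynomial coefficients -/

lemma eval_pos_or_neg {C : Polynomial ℝ} (h : ∀ r, ¬ C.IsRoot r) :
    (∀ x, 0 < C.eval x) ∨ (∀ x, C.eval x < 0) := by
  by_contra! hcon
  obtain ⟨⟨x, hx⟩, y, hy⟩ := hcon
  obtain ⟨z, hz⟩ := mem_range_of_exists_le_of_exists_ge C.continuous ⟨x, hx⟩ ⟨y, hy⟩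
  exact h z hz

lemma zerosLE_zero_of_no_root {C : Polynomial ℝ} (h : ∀ r, ¬ C.IsRoot r) {e f : ℕ → ℝ}
    (hf : PolyGrowth f) (hfe : ∀ n, f n = e n * C.eval (n : ℝ)) (he : ∀ n, 0 ≤ e n)
    (hpos : ∃ n, 0 < e n) : ZerosLE f 0 := by
  obtain ⟨m, hm⟩ := hpos
  have hne : ∃ n, f n ≠ 0 := ⟨m, by rw [hfe]; exact mul_ne_zero hm.ne' (h m)⟩
  rcases eval_pos_or_neg h with h | h
  · exact zerosLE_zero_of_nonneg hf (fun n => by rw [hfe]; exact mul_nonneg (he n) (h n).le) hne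
  · exact zerosLE_zero_of_nonpos hf
      (fun n => by rw [hfe]; exact mul_nonpos_of_nonneg_of_nonpos (he n) (h n).le) hne

lemma exists_factor {C : Polynomial ℝ} (hC : C ≠ 0) {r : ℝ} (hr : C.IsRoot r) {d : ℕ}
    (hd : C.natDegree ≤ d) : ∃ C₁ : Polynomial ℝ, C₁ ≠ 0 ∧ C₁.natDegree + 1 ≤ d ∧
      ∀ x, C.eval x = (x - r) * C₁.eval x := by
  obtain ⟨C₁, rfl⟩ := Polynomial.dvd_iff_isRoot.2 hr
  have h1 : C₁ ≠ 0 := right_ne_zero_of_mul hC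
  refine ⟨C₁, h1, ?_, fun x => by simp⟩
  rw [Polynomial.natDegree_mul (Polynomial.X_sub_C_ne_zero r) h1,
    Polynomial.natDegree_X_sub_C] at hd
  omega

/-- With nonnegative weights `e`, the series `∑ e n * C n * s ^ n` has at most `deg C` zeros:
every real root `r` of `C` is squared by an application of `s d/ds - r`. -/
lemma zerosLE_weight_mul_eval (d : ℕ) : ∀ (C : Polynomial ℝ), C ≠ 0 → C.natDegree ≤ d →
    ∀ (e f : ℕ → ℝ), PolyGrowth f → (∀ n, f n = e n * C.eval (n : ℝ)) → (∀ n, 0 ≤ e n) →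
      (∀ᶠ n in Filter.atTop, 0 < e n) → ZerosLE f d := by
  induction d with
  | zero =>
    intro C hC hd e f hf hfe he hpos
    refine zerosLE_zero_of_no_root (fun r hr => ?_) hf hfe he hpos.exists
    obtain ⟨_, _, h, _⟩ := exists_factor hC hr hd
    omega
  | succ d ih =>
    intro C hC hd e f hf hfe he hpos
    by_cases hroot : ∃ r, C.IsRoot r
    · obtain ⟨r, hr⟩ := hroot
      obtain ⟨C₁, hC₁, hd₁, hev⟩ := exists_factor hC hr hd
      refine ZerosLE.of_sub_mul hf r (ih C₁ hC₁ (by omega) (fun n => e n * ((n : ℝ) - r) ^ 2) _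
        (hf.sub_mul r) (fun n => by rw [hfe, hev]; ring)
        (fun n => mul_nonneg (he n) (sq_nonneg _)) ?_)
      filter_upwards [hpos, (tendsto_natCast_atTop_atTop (R := ℝ)).eventually_gt_atTop r]
        with n hn hn'
      exact mul_pos hn (pow_pos (by linarith) 2)
    · push Not at hroot
      exact (zerosLE_zero_of_no_root hroot hf hfe he hpos.exists).mono (by omega)

/-! ### Cubic coefficients with the anomalous factor `n - 5/4` -/

/-- Nonnegative weights whose tails are dominated by the weight at `1` (and, when the weight at
`0` is present, by the weights at `0` and `1` together). -/
structure Weight (e : ℕ → ℝ) : Prop where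
  growth : PolyGrowth e
  nonneg : ∀ n, 0 ≤ e n
  pos : ∀ n, 1 ≤ n → 0 < e n
  tail : ∀ n : ℕ, 2 ≤ n → e n / ((n : ℝ) - 5 / 4) ≤ e 1 / (n * (n - 1))
  zero : e 0 = 0 ∨ (e 0 = 1 / 3 ∧ e 1 = 1 / 32 ∧
    ∀ n : ℕ, 2 ≤ n → e n * (n : ℝ) ^ 2 / (n - 5 / 4) ≤ e 1 / (n * (n - 1)))

lemma nat_sub_ne (n : ℕ) : (n : ℝ) - 5 / 4 ≠ 0 := by
  intro h
  have : (4 * n : ℝ) = 5 := by linarith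
  have : 4 * n = 5 := by exact_mod_cast this
  omega

lemma anomalous_cancel (n : ℕ) (a b : ℝ) :
    ((n : ℝ) - 5 / 4) * (a / ((n : ℝ) - 5 / 4) * b) = a * b := by
  rw [← mul_assoc, mul_div_cancel₀ _ (nat_sub_ne n)]

lemma polyGrowth_anomalous {e : ℕ → ℝ} (he : PolyGrowth e) {g : ℕ → ℝ} (hg : PolyGrowth g) :
    PolyGrowth fun n => e n / ((n : ℝ) - 5 / 4) * g n := by
  have h1 : PolyGrowth fun n : ℕ => ((n : ℝ) - 5 / 4)⁻¹ := by
    refine polyGrowth_of_bounded 4 fun n => ?_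
    have : (1 / 4 : ℝ) ≤ |(n : ℝ) - 5 / 4| := by
      rcases n with _ | _ | n
      · rw [abs_of_nonpos] <;> norm_num
      · rw [abs_of_nonpos] <;> norm_num
      · have hn : (0 : ℝ) ≤ n := Nat.cast_nonneg n
        push_cast
        rw [abs_of_nonneg] <;> linarith
    rw [abs_inv]
    exact inv_le_of_inv_le₀ (by norm_num) (by linarith)
  simpa [div_eq_mul_inv] using (he.mul h1).mul hg

lemma Weight.eventually_pos {e : ℕ → ℝ} (he : Weight e) : ∀ᶠ n in Filter.atTop, 0 < e n :=
  (Filter.eventually_ge_atTop 1).mono he.pos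

lemma sub_nonneg_of_two_le {n : ℕ} (hn : 2 ≤ n) : 0 < (n : ℝ) - 5 / 4 := by
  have : (2 : ℝ) ≤ n := by exact_mod_cast hn
  linarith

lemma eq_zero_or_one_or_two_le (n : ℕ) : n = 0 ∨ n = 1 ∨ 2 ≤ n := by omega

/-- Three roots above `2`: after the two largest are squared away, the first two coefficients
are nonnegative and dominate the rest. -/
lemma zerosLE_cubic_of_three_large {e : ℕ → ℝ} (he : Weight e) {r₁ r₂ r₃ : ℝ} (h1 : 2 < r₁)
    (h12 : r₁ ≤ r₂) (h23 : r₂ ≤ r₃) {f : ℕ → ℝ} (hf : PolyGrowth f)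
    (hfe : ∀ n : ℕ, f n = e n / ((n : ℝ) - 5 / 4) * ((n - r₁) * (n - r₂) * (n - r₃))) :
    ZerosLE f 2 := by
  refine ZerosLE.of_sub_mul hf r₂ (ZerosLE.of_sub_mul (hf.sub_mul r₂) r₃ ?_)
  set B : ℝ := (r₁ - 1) * ((r₂ - 1) ^ 2 * (r₃ - 1) ^ 2) with hB
  have hBpos : 0 < B := mul_pos (by linarith)
    (mul_pos (pow_pos (by linarith) 2) (pow_pos (by linarith) 2))
  have he1 := he.pos 1 le_rfl
  have hz : (0 : ℝ) ≤ ((0 : ℕ) - r₃) * (((0 : ℕ) - r₂) * f 0) := by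
    have : ((0 : ℕ) - r₃) * (((0 : ℕ) - r₂) * f 0) = 4 / 5 * e 0 * (r₁ * (r₂ ^ 2 * r₃ ^ 2)) := by
      rw [hfe]; push_cast; ring
    rw [this]
    have := he.nonneg 0
    have : 0 < r₁ := by linarith
    positivity
  refine zerosLE_zero_of_dominated ((hf.sub_mul r₂).sub_mul r₃) (D := B * e 1) (by positivity)
    hz ?_ ?_
  · have : ((1 : ℕ) - r₃) * (((1 : ℕ) - r₂) * f 1) = 4 * (B * e 1) := by
      rw [hfe, hB]; push_cast; ring
    rw [this]
    have := mul_pos hBpos he1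
    linarith
  · intro n hn
    have hn2 : (2 : ℝ) ≤ n := by exact_mod_cast hn
    have hE : 0 ≤ e n / ((n : ℝ) - 5 / 4) :=
      div_nonneg (he.nonneg n) (sub_nonneg_of_two_le hn).le
    have hrew : ((n : ℝ) - r₃) * ((n - r₂) * f n) =
        e n / ((n : ℝ) - 5 / 4) * ((n - r₁) * ((n - r₂) ^ 2 * (n - r₃) ^ 2)) := by
      rw [hfe]; ring
    rw [hrew]
    have hlow : -B ≤ (n - r₁) * ((n - r₂) ^ 2 * (n - r₃) ^ 2) := by
      rcases le_total r₁ n with h | h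
      · exact le_trans (by linarith) (mul_nonneg (sub_nonneg.2 h) (by positivity))
      · have : (r₁ - n) * ((r₂ - n) ^ 2 * (r₃ - n) ^ 2) ≤ B := by
          rw [hB]
          gcongr <;> linarith
        linarith
    calc -(B * e 1 / (n * (n - 1))) = -(B * (e 1 / (n * (n - 1)))) := by ring
      _ ≤ -(B * (e n / ((n : ℝ) - 5 / 4))) := by
          have := mul_le_mul_of_nonneg_left (he.tail n hn) hBpos.le
          linarith
      _ = e n / ((n : ℝ) - 5 / 4) * -B := by ring
      _ ≤ _ := mul_le_mul_of_nonneg_left hlow hE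

/-- One root in `(0, 1)` and two above `2`: after the smallest and the largest are squared away,
the first two coefficients are nonnegative and dominate the rest. -/
lemma zerosLE_cubic_of_two_large {e : ℕ → ℝ} (he : Weight e) (he0 : e 0 ≠ 0) {r₁ r₂ r₃ : ℝ}
    (h0 : 0 < r₁) (h1 : r₁ < 1) (h2 : 2 < r₂) (h23 : r₂ ≤ r₃) {f : ℕ → ℝ} (hf : PolyGrowth f)
    (hfe : ∀ n : ℕ, f n = e n / ((n : ℝ) - 5 / 4) * ((n - r₁) * (n - r₂) * (n - r₃))) :
    ZerosLE f 2 := by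
  obtain ⟨ez, eo, htail⟩ := he.zero.resolve_left he0
  refine ZerosLE.of_sub_mul hf r₁ (ZerosLE.of_sub_mul (hf.sub_mul r₁) r₃ ?_)
  set B : ℝ := (r₂ - 1) * (r₃ - 1) ^ 2 with hB
  have hBpos : 0 < B := mul_pos (by linarith) (pow_pos (by linarith) 2)
  have e0 : ((0 : ℕ) - r₃) * (((0 : ℕ) - r₁) * f 0) = 4 / 15 * r₁ ^ 2 * (r₂ * r₃ ^ 2) := by
    rw [hfe, ez]; push_cast; ring
  have e1 : ((1 : ℕ) - r₃) * (((1 : ℕ) - r₁) * f 1) = 1 / 8 * (1 - r₁) ^ 2 * B := by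
    rw [hfe, eo, hB]; push_cast; ring
  have hle : B ≤ r₂ * r₃ ^ 2 := by
    rw [hB]
    gcongr <;> linarith
  refine zerosLE_zero_of_dominated ((hf.sub_mul r₁).sub_mul r₃) (D := B * e 1)
    (by rw [eo]; positivity) ?_ ?_ ?_
  · rw [e0]
    have : 0 < r₂ := by linarith
    positivity
  · rw [e0, e1, eo]
    have a1 : 4 / 15 * r₁ ^ 2 * B ≤ 4 / 15 * r₁ ^ 2 * (r₂ * r₃ ^ 2) := by gcongr
    have a2 : (1 / 32 : ℝ) < 4 / 15 * r₁ ^ 2 + 1 / 8 * (1 - r₁) ^ 2 := by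
      nlinarith [sq_nonneg (r₁ - 1 / 3)]
    have a3 := mul_lt_mul_of_pos_left a2 hBpos
    linarith
  · intro n hn
    have hn2 : (2 : ℝ) ≤ n := by exact_mod_cast hn
    have hE : 0 ≤ e n * (n : ℝ) ^ 2 / ((n : ℝ) - 5 / 4) :=
      div_nonneg (mul_nonneg (he.nonneg n) (by positivity)) (sub_nonneg_of_two_le hn).le
    have hE' : 0 ≤ e n / ((n : ℝ) - 5 / 4) :=
      div_nonneg (he.nonneg n) (sub_nonneg_of_two_le hn).le
    have hrew : ((n : ℝ) - r₃) * ((n - r₁) * f n) =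
        e n / ((n : ℝ) - 5 / 4) * ((n - r₁) ^ 2 * ((n - r₂) * (n - r₃) ^ 2)) := by
      rw [hfe]; ring
    rw [hrew]
    have hlow : -((n : ℝ) ^ 2 * B) ≤ (n - r₁) ^ 2 * ((n - r₂) * (n - r₃) ^ 2) := by
      rcases le_total r₂ n with h | h
      · exact le_trans (by have : 0 ≤ (n : ℝ) ^ 2 * B := by positivity
                           linarith)
          (mul_nonneg (sq_nonneg _) (mul_nonneg (sub_nonneg.2 h) (by positivity)))
      · have : (n - r₁) ^ 2 * ((r₂ - n) * (r₃ - n) ^ 2) ≤ (n : ℝ) ^ 2 * B := by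
          rw [hB]
          gcongr <;> linarith
        linarith
    calc -(B * e 1 / (n * (n - 1))) = -(B * (e 1 / (n * (n - 1)))) := by ring
      _ ≤ -(B * (e n * (n : ℝ) ^ 2 / ((n : ℝ) - 5 / 4))) := by
          have := mul_le_mul_of_nonneg_left (htail n hn) hBpos.le
          linarith
      _ = e n / ((n : ℝ) - 5 / 4) * -((n : ℝ) ^ 2 * B) := by ring
      _ ≤ _ := mul_le_mul_of_nonneg_left hlow hE'

/-- Two roots in `(0, 1)`: their product of factors is nonnegative at every natural number. -/
lemma zerosLE_cubic_of_two_small {e : ℕ → ℝ} (he : Weight e) {r₁ r₂ r₃ : ℝ}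
    (h1 : r₁ ∈ Ioo (0 : ℝ) 1) (h2 : r₂ ∈ Ioo (0 : ℝ) 1) {f : ℕ → ℝ} (hf : PolyGrowth f)
    (hfe : ∀ n : ℕ, f n = e n / ((n : ℝ) - 5 / 4) * ((n - r₁) * (n - r₂) * (n - r₃))) :
    ZerosLE f 2 := by
  refine ZerosLE.of_sub_mul hf (5 / 4) (zerosLE_weight_mul_eval 1
    (Polynomial.X - Polynomial.C r₃) (Polynomial.X_sub_C_ne_zero r₃) (by simp)
    (fun n => e n * (((n : ℝ) - r₁) * (n - r₂))) _ (hf.sub_mul _) (fun n => ?_) (fun n => ?_) ?_)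
  · rw [hfe]
    simp only [Polynomial.eval_sub, Polynomial.eval_X, Polynomial.eval_C]
    rw [anomalous_cancel]
    ring
  · refine mul_nonneg (he.nonneg n) ?_
    rcases n with _ | n
    · have := mul_pos h1.1 h2.1
      push_cast
      linarith
    · have hn : (0 : ℝ) ≤ n := Nat.cast_nonneg n
      push_cast
      exact mul_nonneg (by linarith [h1.2]) (by linarith [h2.2])
  · filter_upwards [Filter.eventually_ge_atTop 1] with n hn
    have hn1 : (1 : ℝ) ≤ n := by exact_mod_cast hn
    exact mul_pos (he.pos n hn) (mul_pos (by linarith [h1.2]) (by linarith [h2.2]))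

/-- A root outside `(0, 1) ∪ (2, ∞)` can be absorbed into the weights, possibly together
with the anomalous factor. -/
lemma zerosLE_of_good_root {e : ℕ → ℝ} (he : Weight e) {C : Polynomial ℝ} (hC : C ≠ 0)
    (hd : C.natDegree ≤ 3) {r : ℝ} (hr : C.IsRoot r)
    (hgood : ¬ ((0 < r ∧ r < 1 ∧ e 0 ≠ 0) ∨ 2 < r)) {f : ℕ → ℝ} (hf : PolyGrowth f)
    (hfe : ∀ n : ℕ, f n = e n / ((n : ℝ) - 5 / 4) * C.eval (n : ℝ)) : ZerosLE f 3 := by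
  obtain ⟨C₁, hC₁, hd₁, hev⟩ := exists_factor hC hr hd
  push Not at hgood
  obtain ⟨hg1, hg2⟩ := hgood
  have hlarge := (tendsto_natCast_atTop_atTop (R := ℝ)).eventually_gt_atTop r
  by_cases h1 : 1 ≤ r
  · refine (zerosLE_weight_mul_eval 2 C₁ hC₁ (by omega)
      (fun n => e n * (((n : ℝ) - r) / (n - 5 / 4))) f hf (fun n => by rw [hfe, hev]; ring)
      (fun n => mul_nonneg (he.nonneg n) ?_) ?_).mono (by norm_num)
    · rcases eq_zero_or_one_or_two_le n with rfl | rfl | hn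
      · exact div_nonneg_of_nonpos (by push_cast; linarith) (by norm_num)
      · exact div_nonneg_of_nonpos (by push_cast; linarith) (by norm_num)
      · have hn2 : (2 : ℝ) ≤ n := by exact_mod_cast hn
        exact div_nonneg (by linarith) (by linarith)
    · filter_upwards [hlarge, Filter.eventually_ge_atTop 2] with n hn hn'
      exact mul_pos (he.pos n (by omega)) (div_pos (by linarith) (sub_nonneg_of_two_le hn'))
  · push Not at h1
    refine ZerosLE.of_sub_mul hf (5 / 4) (zerosLE_weight_mul_eval 2 C₁ hC₁ (by omega)
      (fun n => e n * ((n : ℝ) - r)) _ (hf.sub_mul _) (fun n => ?_) (fun n => ?_) ?_)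
    · rw [hfe, anomalous_cancel, hev]
      ring
    · rcases n with _ | n
      · rcases le_or_gt r 0 with h | h
        · exact mul_nonneg (he.nonneg 0) (by push_cast; linarith)
        · simp [hg1 h h1]
      · have hn : (0 : ℝ) ≤ n := Nat.cast_nonneg n
        exact mul_nonneg (he.nonneg _) (by push_cast; linarith)
    · filter_upwards [hlarge, he.eventually_pos] with n hn hn'
      exact mul_pos hn' (by linarith)

/-- Coefficients `e n * C n / (n - 5/4)` with `C` a nonzero cubic and `e` a weight give at most
three zeros. -/
lemma zerosLE_three {e : ℕ → ℝ} (he : Weight e) {C : Polynomial ℝ} (hC : C ≠ 0)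
    (hd : C.natDegree ≤ 3) :
    ZerosLE (fun n => e n / ((n : ℝ) - 5 / 4) * C.eval (n : ℝ)) 3 := by
  have hf : PolyGrowth (fun n => e n / ((n : ℝ) - 5 / 4) * C.eval (n : ℝ)) :=
    polyGrowth_anomalous he.growth (polyGrowth_eval C)
  set f : ℕ → ℝ := fun n => e n / ((n : ℝ) - 5 / 4) * C.eval (n : ℝ) with hfdef
  have hfe : ∀ n : ℕ, f n = e n / ((n : ℝ) - 5 / 4) * C.eval (n : ℝ) := fun n => rfl
  by_cases hgood : ∃ r, C.IsRoot r ∧ ¬ ((0 < r ∧ r < 1 ∧ e 0 ≠ 0) ∨ 2 < r)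
  · obtain ⟨r, hr, hr'⟩ := hgood
    exact zerosLE_of_good_root he hC hd hr hr' hf hfe
  push Not at hgood
  -- If some quotient of `C` has no real root, the known roots are squared and `5/4` is cancelled.
  by_cases hroot : ∃ r, C.IsRoot r
  swap
  · push Not at hroot
    refine ZerosLE.mono (ZerosLE.of_sub_mul hf (5 / 4) (zerosLE_zero_of_no_root hroot (e := e)
      (hf.sub_mul _) (fun n => ?_) he.nonneg ⟨1, he.pos 1 le_rfl⟩)) (by norm_num)
    rw [hfe, anomalous_cancel]
  obtain ⟨r₁, hr₁⟩ := hroot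
  obtain ⟨C₁, hC₁, hd₁, hev₁⟩ := exists_factor hC hr₁ hd
  by_cases hroot : ∃ r, C₁.IsRoot r
  swap
  · push Not at hroot
    refine ZerosLE.mono (ZerosLE.of_sub_mul hf (5 / 4) (ZerosLE.of_sub_mul (hf.sub_mul _) r₁
      (zerosLE_zero_of_no_root hroot (e := fun n => e n * ((n : ℝ) - r₁) ^ 2)
      ((hf.sub_mul _).sub_mul _) (fun n => ?_)
      (fun n => mul_nonneg (he.nonneg n) (sq_nonneg _)) ?_))) (by norm_num)
    · rw [hfe, anomalous_cancel, hev₁]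
      ring
    · obtain ⟨n, hn, hn'⟩ := (((tendsto_natCast_atTop_atTop (R := ℝ)).eventually_gt_atTop r₁).and
        he.eventually_pos).exists
      exact ⟨n, mul_pos hn' (pow_pos (by linarith) 2)⟩
  obtain ⟨r₂, hr₂⟩ := hroot
  obtain ⟨C₂, hC₂, hd₂, hev₂⟩ := exists_factor hC₁ hr₂ (d := 2) (by omega)
  by_cases hroot : ∃ r, C₂.IsRoot r
  swap
  · push Not at hroot
    refine ZerosLE.of_sub_mul hf (5 / 4) (ZerosLE.of_sub_mul (hf.sub_mul _) r₁
      (ZerosLE.of_sub_mul ((hf.sub_mul _).sub_mul _) r₂ (zerosLE_zero_of_no_root hroot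
      (e := fun n => e n * (((n : ℝ) - r₁) ^ 2 * ((n : ℝ) - r₂) ^ 2))
      (((hf.sub_mul _).sub_mul _).sub_mul _) (fun n => ?_)
      (fun n => mul_nonneg (he.nonneg n) (by positivity)) ?_)))
    · rw [hfe, anomalous_cancel, hev₁, hev₂]
      ring
    · obtain ⟨n, ⟨hn, hn2⟩, hn'⟩ :=
        ((((tendsto_natCast_atTop_atTop (R := ℝ)).eventually_gt_atTop r₁).and
        ((tendsto_natCast_atTop_atTop (R := ℝ)).eventually_gt_atTop r₂)).and he.eventually_pos).exists
      exact ⟨n, mul_pos hn' (mul_pos (pow_pos (by linarith) 2) (pow_pos (by linarith) 2))⟩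
  obtain ⟨r₃, hr₃⟩ := hroot
  obtain ⟨C₃, hC₃, hd₃, hev₃⟩ := exists_factor hC₂ hr₃ (d := 1) (by omega)
  obtain ⟨c, rfl⟩ : ∃ c, C₃ = Polynomial.C c :=
    ⟨_, Polynomial.eq_C_of_natDegree_le_zero (by omega)⟩
  have hc : c ≠ 0 := fun h => hC₃ (by simp [h])
  have hev : ∀ x, C.eval x = c * ((x - r₁) * (x - r₂) * (x - r₃)) := fun x => by
    rw [hev₁, hev₂, hev₃, Polynomial.eval_C]; ring
  have b₁ := hgood r₁ (by simp [Polynomial.IsRoot, hev])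
  have b₂ := hgood r₂ (by simp [Polynomial.IsRoot, hev])
  have b₃ := hgood r₃ (by simp [Polynomial.IsRoot, hev])
  have main : ∀ t₁ t₂ t₃ : ℝ, t₁ ≤ t₂ → t₂ ≤ t₃ → ((0 < t₁ ∧ t₁ < 1 ∧ e 0 ≠ 0) ∨ 2 < t₁) →
      ((0 < t₂ ∧ t₂ < 1 ∧ e 0 ≠ 0) ∨ 2 < t₂) →
      (∀ x, C.eval x = c * ((x - t₁) * (x - t₂) * (x - t₃))) → ZerosLE f 3 := by
    intro t₁ t₂ t₃ h12 h23 c₁ c₂ hev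
    have hg : PolyGrowth fun n : ℕ =>
        e n / ((n : ℝ) - 5 / 4) * ((n - t₁) * (n - t₂) * (n - t₃)) := by
      refine polyGrowth_anomalous he.growth ?_
      have := polyGrowth_eval ((Polynomial.X - Polynomial.C t₁) *
        (Polynomial.X - Polynomial.C t₂) * (Polynomial.X - Polynomial.C t₃))
      simpa only [Polynomial.eval_mul, Polynomial.eval_sub, Polynomial.eval_X,
        Polynomial.eval_C] using this
    have hfg : f = fun n : ℕ => c *
        (e n / ((n : ℝ) - 5 / 4) * ((n - t₁) * (n - t₂) * (n - t₃))) := by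
      funext n
      rw [hfe, hev]; ring
    rw [hfg]
    refine zerosLE_const_mul hc (ZerosLE.mono (d := 2) ?_ (by norm_num))
    rcases c₂ with ⟨p2, q2, e0⟩ | p2
    · rcases c₁ with ⟨p1, q1, -⟩ | p1
      · exact zerosLE_cubic_of_two_small he ⟨p1, q1⟩ ⟨p2, q2⟩ hg fun n => rfl
      · linarith
    · rcases c₁ with ⟨p1, q1, e0⟩ | p1
      · exact zerosLE_cubic_of_two_large he e0 p1 q1 p2 h23 hg fun n => rfl
      · exact zerosLE_cubic_of_three_large he p1 h12 h23 hg fun n => rfl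
  rcases le_total r₁ r₂ with h12 | h12 <;> rcases le_total r₂ r₃ with h23 | h23 <;>
    rcases le_total r₁ r₃ with h13 | h13
  · exact main r₁ r₂ r₃ h12 h23 b₁ b₂ hev
  · exact main r₁ r₂ r₃ h12 h23 b₁ b₂ hev
  · exact main r₁ r₃ r₂ h13 h23 b₁ b₃ fun x => by rw [hev]; ring
  · exact main r₃ r₁ r₂ h13 h12 b₃ b₁ fun x => by rw [hev]; ring
  · exact main r₂ r₁ r₃ h12 h13 b₂ b₁ fun x => by rw [hev]; ring
  · exact main r₂ r₃ r₁ h23 h13 b₂ b₃ fun x => by rw [hev]; ring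
  · exact main r₃ r₂ r₁ h23 h12 b₃ b₂ fun x => by rw [hev]; ring
  · exact main r₃ r₂ r₁ h23 h12 b₃ b₂ fun x => by rw [hev]; ring

/-! ### The hypergeometric coefficients -/

/-- Taylor coefficients of `I₀ / I₁` in the variable `s = 1 + 4h`. -/
noncomputable def p : ℕ → ℝ
  | 0 => 1
  | n + 1 => p n * ((4 * n + 1) * (4 * n + 3) / (16 * (n + 1) * (n + 2)))

/-- Taylor coefficients of `I₂ / I₁` in the variable `s = 1 + 4h`. -/
noncomputable def q (n : ℕ) : ℝ := -p n / (4 * n - 1)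

/-- The weights carrying the coefficients of `I₀ / I₁` and `I₂ / I₁` simultaneously. -/
noncomputable def w (n : ℕ) : ℝ := p n / ((4 * n - 1) * (4 * n - 3))

/-- The cubic attached to `(a + b s) I₀ / I₁ + (c + d s) I₂ / I₁`. -/
noncomputable def cub (a b c d : ℝ) : Polynomial ℝ :=
  Polynomial.C (16 * a + 16 * b) * Polynomial.X ^ 3 +
    Polynomial.C (-36 * a - 4 * b - 4 * c - 4 * d) * Polynomial.X ^ 2 +
    Polynomial.C (23 * a - 20 * b + 8 * c - 4 * d) * Polynomial.X +
    Polynomial.C (-(15 / 4) * (a + c))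

/-- Taylor coefficients of `(a + b s) I₀ / I₁ + (c + d s) I₂ / I₁`. -/
noncomputable def g (a b c d : ℝ) (n : ℕ) : ℝ :=
  w n / ((n : ℝ) - 5 / 4) * (cub a b c d).eval (n : ℝ)

lemma p_succ (n : ℕ) :
    p (n + 1) = p n * ((4 * n + 1) * (4 * n + 3) / (16 * (n + 1) * (n + 2))) := rfl

lemma p_pos (n : ℕ) : 0 < p n := by
  induction n with
  | zero => simp [p]
  | succ n ih => rw [p_succ]; positivity

lemma p_le_one (n : ℕ) : p n ≤ 1 := by
  induction n with
  | zero => simp [p]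
  | succ n ih =>
    rw [p_succ]
    refine mul_le_one₀ ih (by positivity) ?_
    rw [div_le_one (by positivity)]
    have hn : (0 : ℝ) ≤ n := Nat.cast_nonneg n
    nlinarith

lemma succ_mul_p_succ_le (n : ℕ) : ((n : ℝ) + 1) * p (n + 1) ≤ 3 / 32 := by
  induction n with
  | zero => simp [p]; norm_num
  | succ n ih =>
    refine le_trans ?_ ih
    rw [p_succ (n + 1)]
    have hp := p_pos (n + 1)
    have hn : (0 : ℝ) ≤ n := Nat.cast_nonneg n
    push_cast
    rw [mul_comm, mul_comm ((n : ℝ) + 1), mul_assoc]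
    refine mul_le_mul_of_nonneg_left ?_ hp.le
    rw [div_mul_eq_mul_div, div_le_iff₀ (by positivity)]
    nlinarith [mul_nonneg hn hn, mul_nonneg (mul_nonneg hn hn) hn]

lemma w_zero : w 0 = 1 / 3 := by simp [w, p]

lemma w_succ (n : ℕ) : w (n + 1) = p n / (16 * (n + 1) * (n + 2)) := by
  rw [w, p_succ]
  push_cast
  have h1 : 4 * ((n : ℝ) + 1) - 1 = 4 * n + 3 := by ring
  have h2 : 4 * ((n : ℝ) + 1) - 3 = 4 * n + 1 := by ring
  rw [h1, h2]
  field_simp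

lemma w_one : w 1 = 1 / 32 := by
  rw [w_succ 0]; norm_num [p]

lemma w_pos (n : ℕ) : 0 < w n := by
  rcases n with _ | n
  · rw [w_zero]; norm_num
  · have := p_pos n
    rw [w_succ]; positivity

lemma w_le_one (n : ℕ) : w n ≤ 1 := by
  rcases n with _ | n
  · rw [w_zero]; norm_num
  · rw [w_succ, div_le_one (by positivity)]
    have hn : (0 : ℝ) ≤ n := Nat.cast_nonneg n
    have := p_le_one n
    nlinarith [mul_nonneg hn hn]

lemma polyGrowth_w : PolyGrowth w :=
  polyGrowth_of_bounded 1 fun n => by rw [abs_of_pos (w_pos n)]; exact w_le_one n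

lemma polyGrowth_nat_mul {f : ℕ → ℝ} (hf : PolyGrowth f) : PolyGrowth fun n => (n : ℝ) * f n := by
  simpa using hf.sub_mul 0

lemma w_tail (n : ℕ) (hn : 2 ≤ n) :
    w n * (n : ℝ) ^ 2 / (n - 5 / 4) ≤ w 1 / (n * (n - 1)) := by
  obtain ⟨m, rfl⟩ := Nat.exists_eq_add_of_le' hn
  have hm : (0 : ℝ) ≤ m := Nat.cast_nonneg m
  have hp := succ_mul_p_succ_le (m + 1)
  rw [w_one, w]
  push_cast at hp ⊢
  have h1 : (0 : ℝ) < 4 * (m + 2) - 1 := by linarith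
  have h2 : (0 : ℝ) < 4 * (m + 2) - 3 := by linarith
  have h3 : (0 : ℝ) < (m + 2) - 5 / 4 := by linarith
  have h4 : (0 : ℝ) < (m + 2) - 1 := by linarith
  have h5 : (0 : ℝ) < m + 2 := by linarith
  rw [div_mul_eq_mul_div, div_div, div_le_div_iff₀ (by positivity) (by positivity)]
  have h6 : p (m + 2) * ((m : ℝ) + 2) ^ 2 * ((m + 2) * (m + 2 - 1)) ≤
      3 / 32 * ((m + 2) * ((m + 2) * (m + 2 - 1))) := by
    have : (0 : ℝ) ≤ (m + 2) * ((m + 2) * (m + 2 - 1)) := by positivity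
    have := mul_le_mul_of_nonneg_right hp this
    rw [show m + 1 + 1 = m + 2 from rfl] at this
    linarith
  refine h6.trans ?_
  nlinarith [mul_nonneg hm hm, mul_nonneg (mul_nonneg hm hm) hm]

lemma weight_w : Weight w where
  growth := polyGrowth_w
  nonneg n := (w_pos n).le
  pos n _ := w_pos n
  tail n hn := by
    refine le_trans ?_ (w_tail n hn)
    have h2 : (2 : ℝ) ≤ n := by exact_mod_cast hn
    have := sub_nonneg_of_two_le hn
    have := w_pos n
    gcongr
    exact le_mul_of_one_le_right this.le (one_le_pow₀ (by linarith))
  zero := Or.inr ⟨w_zero, w_one, w_tail⟩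

lemma weight_nat_mul_w : Weight fun n => (n : ℝ) * w n where
  growth := polyGrowth_nat_mul polyGrowth_w
  nonneg n := mul_nonneg (Nat.cast_nonneg n) (w_pos n).le
  pos n hn := mul_pos (by exact_mod_cast hn) (w_pos n)
  tail n hn := by
    simp only [Nat.cast_one, one_mul]
    refine le_trans ?_ (w_tail n hn)
    have h2 : (2 : ℝ) ≤ n := by exact_mod_cast hn
    have := sub_nonneg_of_two_le hn
    have := w_pos n
    rw [mul_comm]
    gcongr
    nlinarith
  zero := Or.inl (by simp)

lemma natDegree_cub (a b c d : ℝ) : (cub a b c d).natDegree ≤ 3 := by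
  unfold cub
  compute_degree

lemma eval_cub (a b c d x : ℝ) : (cub a b c d).eval x = (16 * a + 16 * b) * x ^ 3 +
    (-36 * a - 4 * b - 4 * c - 4 * d) * x ^ 2 + (23 * a - 20 * b + 8 * c - 4 * d) * x +
    -(15 / 4) * (a + c) := by
  simp [cub]

/-- The values at `5/4`, `3/4`, `1/4`, `0` determine the parameters successively. -/
lemma cub_ne_zero {a b c d : ℝ} (h : ¬ (a = 0 ∧ b = 0 ∧ c = 0 ∧ d = 0)) : cub a b c d ≠ 0 := by
  intro h0
  have key : ∀ x, (cub a b c d).eval x = 0 := fun x => by rw [h0]; simp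
  have k1 := key (5 / 4)
  have k2 := key (3 / 4)
  have k3 := key (1 / 4)
  have k4 := key 0
  rw [eval_cub] at k1 k2 k3 k4
  have hd : d = 0 := by linarith
  have hb : b = 0 := by rw [hd] at k2; linarith
  have hc : c = 0 := by rw [hd, hb] at k3; linarith
  exact h ⟨by rw [hc] at k4; linarith, hb, hc, hd⟩

lemma polyGrowth_g (a b c d : ℝ) : PolyGrowth (g a b c d) :=
  polyGrowth_anomalous polyGrowth_w (polyGrowth_eval _)

variable {a b c d : ℝ}

lemma zerosLE_g (h : ¬ (a = 0 ∧ b = 0 ∧ c = 0 ∧ d = 0)) : ZerosLE (g a b c d) 3 :=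
  zerosLE_three weight_w (cub_ne_zero h) (natDegree_cub a b c d)

lemma zerosLE_nat_mul_g (h : ¬ (a = 0 ∧ b = 0 ∧ c = 0 ∧ d = 0)) :
    ZerosLE (fun n => (n : ℝ) * g a b c d n) 3 := by
  convert zerosLE_three weight_nat_mul_w (cub_ne_zero h) (natDegree_cub a b c d) using 2 with n
  rw [g]; ring

/-- The two factors `n` and `n - 1` make the anomalous factor harmless. -/
lemma zerosLE_nat_mul_nat_mul_g (h : ¬ (a = 0 ∧ b = 0 ∧ c = 0 ∧ d = 0)) :
    ZerosLE (fun n => ((n : ℝ) - 1) * ((n : ℝ) * g a b c d n)) 3 := by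
  refine zerosLE_weight_mul_eval 3 (cub a b c d) (cub_ne_zero h) (natDegree_cub a b c d)
    (fun n => ((n : ℝ) - 1) * (n * (w n / ((n : ℝ) - 5 / 4)))) _
    ((polyGrowth_nat_mul (polyGrowth_g a b c d)).sub_mul 1) (fun n => by rw [g]; ring) ?_ ?_
  · intro n
    rcases eq_zero_or_one_or_two_le n with rfl | rfl | hn
    · simp
    · simp
    · have h2 : (2 : ℝ) ≤ n := by exact_mod_cast hn
      exact mul_nonneg (by linarith) (mul_nonneg (by linarith)
        (div_nonneg (w_pos n).le (sub_nonneg_of_two_le hn).le))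
  · filter_upwards [Filter.eventually_ge_atTop 2] with n hn
    have h2 : (2 : ℝ) ≤ n := by exact_mod_cast hn
    exact mul_pos (by linarith) (mul_pos (by linarith)
      (div_pos (w_pos n) (sub_nonneg_of_two_le hn)))

lemma g_zero : g a b c d 0 = a * p 0 + c * q 0 := by
  simp only [g, w_zero, eval_cub, q, p]
  norm_num
  ring

lemma g_succ (n : ℕ) :
    g a b c d (n + 1) = a * p (n + 1) + b * p n + c * q (n + 1) + d * q n := by
  have h1 : (4 * n : ℝ) - 1 ≠ 0 := by
    intro h
    have h2 : (4 * n : ℝ) = 1 := by linarith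
    have h3 : 4 * n = 1 := by exact_mod_cast h2
    omega
  have h4 : ((n : ℝ) + 1) - 5 / 4 = (4 * n - 1) / 4 := by ring
  have h5 : 4 * ((n : ℝ) + 1) - 1 = 4 * n + 3 := by ring
  simp only [g, w_succ, eval_cub, q, p_succ]
  push_cast
  rw [h4, h5]
  have hn : (0 : ℝ) ≤ n := Nat.cast_nonneg n
  generalize (n : ℝ) = x at *
  generalize hu : 4 * x - 1 = u at *
  have h7 : 4 * x + 3 ≠ 0 := by positivity
  have h8 : x + 1 ≠ 0 := by positivity
  have h9 : x + 2 ≠ 0 := by positivity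
  field_simp
  rw [← hu]
  ring

/-- The generating series of `g` in terms of those of `p` and `q`. -/
lemma ser_g {s P Q : ℝ} (hs : s ∈ Ioo (0 : ℝ) 1) (hP : HasSum (fun n => p n * s ^ n) P)
    (hQ : HasSum (fun n => q n * s ^ n) Q) :
    ser (g a b c d) s = (a + b * s) * P + (c + d * s) * Q := by
  have h := (polyGrowth_g a b c d).hasSum hs
  have hP' := (hasSum_nat_add_iff' 1).2 hP
  have hQ' := (hasSum_nat_add_iff' 1).2 hQ
  have h' := (hasSum_nat_add_iff' 1).2 h
  have h2 := (((hP'.mul_left a).add (hP.mul_left (b * s))).add (hQ'.mul_left c)).add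
    (hQ.mul_left (d * s))
  have h3 : (fun n => g a b c d (n + 1) * s ^ (n + 1)) = fun n =>
      a * (p (n + 1) * s ^ (n + 1)) + b * s * (p n * s ^ n) + c * (q (n + 1) * s ^ (n + 1)) +
        d * s * (q n * s ^ n) := by
    funext n
    rw [g_succ]; ring
  rw [h3] at h'
  have h4 := h'.unique h2
  simp only [Finset.sum_range_one, g_zero, pow_zero, mul_one] at h4
  linarith

/-! ### The Abelian integrals as power series -/

lemma succ_mul_choose (α : ℝ) (n : ℕ) :
    ((n : ℝ) + 1) * Ring.choose α (n + 1) = (α - n) * Ring.choose α n := by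
  have h1 := Ring.descPochhammer_eq_factorial_smul_choose α n
  have h2 := Ring.descPochhammer_eq_factorial_smul_choose α (n + 1)
  rw [descPochhammer_succ_right, Polynomial.smeval_mul, h1, Polynomial.smeval_sub,
    Polynomial.smeval_X, Polynomial.smeval_natCast, Nat.factorial_succ] at h2
  simp only [nsmul_eq_mul, pow_one, pow_zero, mul_one] at h2
  push_cast at h2
  have h3 : (n.factorial : ℝ) ≠ 0 := by exact_mod_cast n.factorial_ne_zero
  refine mul_left_cancel₀ h3 ?_
  linarith

lemma hasSum_binomial (α : ℝ) {y : ℝ} (hy : |y| < 1) :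
    HasSum (fun n => Ring.choose α n * y ^ n) ((1 + y) ^ α) := by
  have h := (Real.one_add_rpow_hasFPowerSeriesOnBall_zero (a := α)).hasSum (y := y) (by
    rw [Metric.mem_eball, edist_zero_right, ← ofReal_norm, Real.norm_eq_abs]
    exact ENNReal.ofReal_lt_one.2 hy)
  simpa only [binomialSeries, FormalMultilinearSeries.ofScalars_apply_eq, smul_eq_mul, zero_add]
    using h

/-- The trigonometric moments `∫₀^π cos^m θ sin² θ dθ`. -/
noncomputable def J (m : ℕ) : ℝ := ∫ θ in (0 : ℝ)..Real.pi, Real.cos θ ^ m * Real.sin θ ^ 2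

lemma integral_cos_pow_add_two (m : ℕ) :
    ∫ θ in (0 : ℝ)..Real.pi, Real.cos θ ^ (m + 2) =
      ((m : ℝ) + 1) / (m + 2) * ∫ θ in (0 : ℝ)..Real.pi, Real.cos θ ^ m := by
  rw [integral_cos_pow]; simp

lemma J_eq (m : ℕ) : J m = (∫ θ in (0 : ℝ)..Real.pi, Real.cos θ ^ m) / (m + 2) := by
  have h : ∀ n : ℕ, IntervalIntegrable (fun θ => Real.cos θ ^ n) MeasureTheory.volume 0 Real.pi :=
    fun n => (by fun_prop : Continuous fun θ => Real.cos θ ^ n).intervalIntegrable _ _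
  have h2 : J m = (∫ θ in (0 : ℝ)..Real.pi, Real.cos θ ^ m) -
      ∫ θ in (0 : ℝ)..Real.pi, Real.cos θ ^ (m + 2) := by
    rw [← intervalIntegral.integral_sub (h m) (h (m + 2)), J]
    congr 1
    funext θ
    rw [Real.sin_sq]; ring
  rw [h2, integral_cos_pow_add_two]
  field_simp
  ring

lemma J_zero : J 0 = Real.pi / 2 := by
  rw [J_eq]; simp

lemma J_add_two (m : ℕ) : J (m + 2) = ((m : ℝ) + 1) / (m + 4) * J m := by
  rw [J_eq, J_eq, integral_cos_pow_add_two]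
  push_cast
  field_simp
  ring

lemma J_odd (n : ℕ) : J (2 * n + 1) = 0 := by
  induction n with
  | zero => rw [J_eq]; simp
  | succ n ih =>
    rw [show 2 * (n + 1) + 1 = 2 * n + 1 + 2 by ring, J_add_two, ih, mul_zero]

/-- Termwise integration of the binomial series; the odd moments vanish. -/
lemma hasSum_integral (α : ℝ) {a : ℝ} (ha0 : 0 ≤ a) (ha : a < 1) :
    HasSum (fun n => Ring.choose α (2 * n) * J (2 * n) * (a ^ 2) ^ n)
      (∫ θ in (0 : ℝ)..Real.pi, (1 + a * Real.cos θ) ^ α * Real.sin θ ^ 2) := by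
  have habs : ∀ θ, |a * Real.cos θ| ≤ a := fun θ => by
    rw [abs_mul, abs_of_nonneg ha0]
    exact mul_le_of_le_one_right ha0 (Real.abs_cos_le_one θ)
  have hsum := (hasSum_binomial α (y := a) (by rwa [abs_of_nonneg ha0])).summable.abs
  have h := intervalIntegral.hasSum_integral_of_dominated_convergence (a := 0) (b := Real.pi)
    (μ := MeasureTheory.volume)
    (F := fun (m : ℕ) θ => Ring.choose α m * (a * Real.cos θ) ^ m * Real.sin θ ^ 2)
    (f := fun θ => (1 + a * Real.cos θ) ^ α * Real.sin θ ^ 2)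
    (fun m _ => |Ring.choose α m * a ^ m|)
    (fun m => (by fun_prop : Continuous fun θ =>
      Ring.choose α m * (a * Real.cos θ) ^ m * Real.sin θ ^ 2).aestronglyMeasurable)
    (fun m => Filter.Eventually.of_forall fun θ _ => ?_)
    (Filter.Eventually.of_forall fun θ _ => hsum) intervalIntegrable_const
    (Filter.Eventually.of_forall fun θ _ =>
      (hasSum_binomial α ((habs θ).trans_lt ha)).mul_right _)
  · have h2 : ∀ m : ℕ, (∫ θ in (0 : ℝ)..Real.pi,
        Ring.choose α m * (a * Real.cos θ) ^ m * Real.sin θ ^ 2) =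
        Ring.choose α m * a ^ m * J m := by
      intro m
      rw [J, ← intervalIntegral.integral_const_mul]
      congr 1
      funext θ
      rw [mul_pow]; ring
    simp only [h2] at h
    have hinj : Function.Injective fun n : ℕ => 2 * n := fun m n h => by
      simpa using h
    have h3 := (hinj.hasSum_iff (fun m hm => ?_)).2 h
    · refine h3.congr_fun fun n => ?_
      rw [Function.comp_apply, ← pow_mul]
      ring
    · obtain ⟨n, rfl⟩ : Odd m := by
        rw [← Nat.not_even_iff_odd]
        rintro ⟨n, rfl⟩
        exact hm ⟨n, by ring⟩
      rw [J_odd, mul_zero]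
  · rw [Real.norm_eq_abs, abs_mul, abs_mul, abs_mul, abs_pow, abs_pow a, abs_of_nonneg ha0,
      abs_of_nonneg (sq_nonneg (Real.sin θ))]
    have h1 := pow_le_pow_left₀ (abs_nonneg _) (habs θ) m
    calc _ ≤ |Ring.choose α m| * a ^ m * 1 :=
          mul_le_mul (mul_le_mul_of_nonneg_left h1 (abs_nonneg _)) (Real.sin_sq_le_one θ)
            (sq_nonneg _) (by positivity)
      _ = _ := mul_one _

lemma coeff_succ (α : ℝ) (n : ℕ) :
    Ring.choose α (2 * (n + 1)) * J (2 * (n + 1)) = Ring.choose α (2 * n) * J (2 * n) *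
      ((2 * n - α) * (2 * n + 1 - α) / (4 * (n + 1) * (n + 2))) := by
  have h1 := succ_mul_choose α (2 * n)
  have h2 := succ_mul_choose α (2 * n + 1)
  rw [show 2 * (n + 1) = 2 * n + 2 by ring, J_add_two]
  push_cast at h1 h2 ⊢
  have e2 : Ring.choose α (2 * n + 2) =
      (α - (2 * n + 1)) * ((α - 2 * n) * Ring.choose α (2 * n) / (2 * n + 1)) / (2 * n + 2) := by
    rw [← h1, eq_div_iff (by positivity), mul_div_cancel_left₀ _ (by positivity), ← h2]
    ring
  rw [e2]
  field_simp
  ring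

lemma coeff_neg_half (n : ℕ) :
    Ring.choose (-1 / 2 : ℝ) (2 * n) * J (2 * n) = Real.pi / 2 * p n := by
  induction n with
  | zero => simp [J_zero, p]
  | succ n ih =>
    rw [coeff_succ, ih, p_succ]
    field_simp
    ring

lemma coeff_half (n : ℕ) :
    Ring.choose (1 / 2 : ℝ) (2 * n) * J (2 * n) = Real.pi / 2 * q n := by
  induction n with
  | zero => simp [J_zero, p, q]
  | succ n ih =>
    have h1 : (4 * n : ℝ) - 1 ≠ 0 := by
      intro h
      have h2 : (4 * n : ℝ) = 1 := by linarith
      have h3 : 4 * n = 1 := by exact_mod_cast h2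
      omega
    rw [coeff_succ, ih, q, q, p_succ]
    push_cast
    have h5 : 4 * ((n : ℝ) + 1) - 1 = 4 * n + 3 := by ring
    have h6 : (2 * (n : ℝ) - 1 / 2) = (4 * n - 1) / 2 := by ring
    rw [h5, h6]
    generalize 4 * (n : ℝ) - 1 = u at *
    field_simp
    ring

/-- The substitution `x = √(1 + √s cos θ)` with `s = 1 + 4h`. -/
lemma AbI_eq (k : ℕ) {h : ℝ} (hh : h ∈ Ioo (-(1 : ℝ) / 4) 0) :
    AbI k h = (1 + 4 * h) / Real.sqrt 2 * ∫ θ in (0 : ℝ)..Real.pi,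
      (1 + Real.sqrt (1 + 4 * h) * Real.cos θ) ^ (((k : ℝ) - 1) / 2) * Real.sin θ ^ 2 := by
  have hs0 : 0 < 1 + 4 * h := by linarith [hh.1]
  have hs1 : 1 + 4 * h < 1 := by linarith [hh.2]
  set a := Real.sqrt (1 + 4 * h) with ha
  have ha0 : 0 < a := Real.sqrt_pos.2 hs0
  have ha2 : a ^ 2 = 1 + 4 * h := Real.sq_sqrt hs0.le
  have ha1 : a < 1 := by nlinarith
  have hu : ∀ θ, 0 < 1 + a * Real.cos θ := fun θ => by
    nlinarith [Real.neg_one_le_cos θ]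
  have hderiv : ∀ θ ∈ uIcc 0 Real.pi, HasDerivAt (fun θ => Real.sqrt (1 + a * Real.cos θ))
      (a * -Real.sin θ / (2 * Real.sqrt (1 + a * Real.cos θ))) θ := fun θ _ =>
    (((Real.hasDerivAt_cos θ).const_mul a).const_add 1).sqrt (hu θ).ne'
  have hcont : Continuous fun θ => a * -Real.sin θ / (2 * Real.sqrt (1 + a * Real.cos θ)) :=
    Continuous.div (by fun_prop) (by fun_prop) fun θ =>
      mul_ne_zero two_ne_zero (Real.sqrt_pos.2 (hu θ)).ne'
  have hsub := intervalIntegral.integral_comp_mul_deriv hderiv hcont.continuousOn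
    (g := fun x => x ^ k * Real.sqrt (2 * h + x ^ 2 - x ^ 4 / 2)) (by fun_prop)
  have hends : xplus h = Real.sqrt (1 + a * Real.cos 0) ∧
      xminus h = Real.sqrt (1 + a * Real.cos Real.pi) := by
    simp [xplus, xminus, ha, sub_eq_add_neg]
  rw [AbI, hends.1, hends.2, intervalIntegral.integral_symm, ← hsub,
    ← intervalIntegral.integral_neg, ← intervalIntegral.integral_const_mul,
    ← intervalIntegral.integral_const_mul]
  refine intervalIntegral.integral_congr fun θ hθ => ?_
  rw [uIcc_of_le Real.pi_pos.le] at hθ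
  have hsin := Real.sin_nonneg_of_mem_Icc hθ
  have hy : Real.sqrt (2 * h + Real.sqrt (1 + a * Real.cos θ) ^ 2 -
      Real.sqrt (1 + a * Real.cos θ) ^ 4 / 2) = a * Real.sin θ / Real.sqrt 2 := by
    rw [show Real.sqrt (1 + a * Real.cos θ) ^ 4 = (Real.sqrt (1 + a * Real.cos θ) ^ 2) ^ 2 by ring,
      Real.sq_sqrt (hu θ).le, show 2 * h + (1 + a * Real.cos θ) - (1 + a * Real.cos θ) ^ 2 / 2 =
        (a * Real.sin θ) ^ 2 / 2 by rw [mul_pow, Real.sin_sq]; linear_combination (-1 / 2) * ha2,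
      Real.sqrt_div' _ (by norm_num), Real.sqrt_sq (mul_nonneg ha0.le hsin)]
  have hpow : (1 + a * Real.cos θ) ^ (((k : ℝ) - 1) / 2) =
      Real.sqrt (1 + a * Real.cos θ) ^ k / Real.sqrt (1 + a * Real.cos θ) := by
    rw [sub_div, Real.rpow_sub (hu θ), Real.sqrt_eq_rpow, ← Real.rpow_natCast,
      ← Real.rpow_mul (hu θ).le]
    congr 2
    ring
  simp only [Function.comp_apply]
  rw [hy, hpow, ← ha2]
  have h2 : Real.sqrt 2 ≠ 0 := by positivity
  have h3 := (Real.sqrt_pos.2 (hu θ)).ne'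
  field_simp

/-- The three integrals in terms of the series of `p` and `q`. -/
lemma exists_AbI {h : ℝ} (hh : h ∈ Ioo (-(1 : ℝ) / 4) 0) : ∃ K P Q : ℝ, 0 < K ∧
    HasSum (fun n => p n * (1 + 4 * h) ^ n) P ∧ HasSum (fun n => q n * (1 + 4 * h) ^ n) Q ∧
    AbI 0 h = K * P ∧ AbI 1 h = K ∧ AbI 2 h = K * Q := by
  have hs0 : 0 < 1 + 4 * h := by linarith [hh.1]
  have ha2 : Real.sqrt (1 + 4 * h) ^ 2 = 1 + 4 * h := Real.sq_sqrt hs0.le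
  have ha0 := Real.sqrt_nonneg (1 + 4 * h)
  have ha1 : Real.sqrt (1 + 4 * h) < 1 := by nlinarith [hh.2]
  have hpi : Real.pi / 2 ≠ 0 := by positivity
  have h0 := hasSum_integral (-1 / 2) ha0 ha1
  have h2 := hasSum_integral (1 / 2) ha0 ha1
  simp only [coeff_neg_half, coeff_half, ha2, mul_assoc] at h0 h2
  have h0' := h0.mul_left (Real.pi / 2)⁻¹
  have h2' := h2.mul_left (Real.pi / 2)⁻¹
  simp only [inv_mul_cancel_left₀ hpi] at h0' h2'
  refine ⟨(1 + 4 * h) / Real.sqrt 2 * (Real.pi / 2), _, _, by positivity, h0', h2', ?_, ?_, ?_⟩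
  · rw [AbI_eq 0 hh, mul_assoc, mul_inv_cancel_left₀ hpi]
    norm_num
  · rw [AbI_eq 1 hh]
    simp [integral_sin_sq]
  · rw [AbI_eq 2 hh, mul_assoc, mul_inv_cancel_left₀ hpi]
    norm_num

/-! ### Levels of `G` and of `G ± b s` -/

lemma enat_le_of_not_succ_le {x : ℕ∞} {d : ℕ} (h : ¬ ((d + 1 : ℕ) : ℕ∞) ≤ x) : x ≤ d := by
  have h1 : x < ((d + 1 : ℕ) : ℕ∞) := not_le.1 h
  exact Order.le_of_lt_add_one (by exact_mod_cast h1)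

lemma hasDerivAt_ser_nat_mul_div {f : ℕ → ℝ} (hf : PolyGrowth f) {s : ℝ} (hs : s ∈ Ioo (0 : ℝ) 1) :
    HasDerivAt (fun s => ser (fun n => (n : ℝ) * f n) s / s)
      (ser (fun n => ((n : ℝ) - 1) * ((n : ℝ) * f n)) s / s ^ 2) s := by
  have hnf := polyGrowth_nat_mul hf
  have h := (hnf.hasDerivAt hs).div (hasDerivAt_id s) hs.1.ne'
  refine h.congr_deriv ?_
  have h2 := ((polyGrowth_nat_mul hnf).hasSum hs).sub (hnf.hasSum hs)
  have h3 : ser (fun n => ((n : ℝ) - 1) * ((n : ℝ) * f n)) s =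
      ser (fun n => (n : ℝ) * ((n : ℝ) * f n)) s - ser (fun n => (n : ℝ) * f n) s := by
    rw [← h2.tsum_eq, ser]
    exact tsum_congr fun n => by ring
  rw [h3]
  have := hs.1.ne'
  simp only [id]
  field_simp

lemma encard_deriv_zero_le (h : ¬ (a = 0 ∧ b = 0 ∧ c = 0 ∧ d = 0)) :
    {s ∈ Ioo (0 : ℝ) 1 | ser (fun n => (n : ℝ) * g a b c d n) s / s = 0}.encard ≤ 3 := by
  refine le_trans (Set.encard_le_encard ?_) (zerosLE_nat_mul_g h)
  rintro s ⟨hs, hs0⟩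
  exact ⟨hs, (div_eq_zero_iff.1 hs0).resolve_right hs.1.ne'⟩

lemma encard_deriv_two_zero_le (h : ¬ (a = 0 ∧ b = 0 ∧ c = 0 ∧ d = 0)) :
    {s ∈ Ioo (0 : ℝ) 1 | ser (fun n => ((n : ℝ) - 1) * ((n : ℝ) * g a b c d n)) s / s ^ 2 =
      0}.encard ≤ 3 := by
  refine le_trans (Set.encard_le_encard ?_) (zerosLE_nat_mul_nat_mul_g h)
  rintro s ⟨hs, hs0⟩
  exact ⟨hs, (div_eq_zero_iff.1 hs0).resolve_right (pow_ne_zero 2 hs.1.ne')⟩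

lemma encard_levels_le_seven (h : ¬ (a = 0 ∧ b = 0 ∧ c = 0 ∧ d = 0))
    (e : ℝ) :
    {s ∈ Ioo (0 : ℝ) 1 | ser (g a b c d) s = e}.encard +
      {s ∈ Ioo (0 : ℝ) 1 | ser (g a b c d) s = -e}.encard ≤ 7 := by
  have hd := fun s hs => (polyGrowth_g a b c d).hasDerivAt (s := s) hs
  have h1 := fun e => encard_level_le hd e (d := 3) (encard_deriv_zero_le h)
  have hnot := not_four_and_four hd (b := e) (encard_deriv_zero_le h) (zerosLE_g h)
  rcases not_and_or.1 hnot with h2 | h2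
  · exact (add_le_add (enat_le_of_not_succ_le (d := 3) h2) (h1 (-e))).trans (by norm_num)
  · exact (add_le_add (h1 e) (enat_le_of_not_succ_le (d := 3) h2)).trans (by norm_num)

lemma encard_linear_levels_le_nine (h : ¬ (a = 0 ∧ b = 0 ∧ c = 0 ∧ d = 0))
    (e m : ℝ) :
    {s ∈ Ioo (0 : ℝ) 1 | ser (g a b c d) s + m * s = e}.encard +
      {s ∈ Ioo (0 : ℝ) 1 | ser (g a b c d) s - m * s = -e}.encard ≤ 9 := by
  have hd := fun s hs => (polyGrowth_g a b c d).hasDerivAt (s := s) hs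
  have hd2 := fun s hs => hasDerivAt_ser_nat_mul_div (polyGrowth_g a b c d) (s := s) hs
  have h1 := fun e => encard_level_le hd2 e (d := 3) (encard_deriv_two_zero_le h)
  have hnot := not_four_and_four hd2 (b := -m) (encard_deriv_two_zero_le h)
    (encard_deriv_zero_le h)
  rw [neg_neg] at hnot
  have hlev : ∀ (m e : ℝ) (k : ℕ), {s ∈ Ioo (0 : ℝ) 1 |
      ser (fun n => (n : ℝ) * g a b c d n) s / s = -m}.encard ≤ k →
      {s ∈ Ioo (0 : ℝ) 1 | ser (g a b c d) s + m * s = e}.encard ≤ (k + 1 : ℕ) := by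
    intro m e k hk
    refine encard_level_le (f' := fun s => ser (fun n => (n : ℝ) * g a b c d n) s / s + m)
      (fun s hs => ?_) e ?_
    · exact ((hd s hs).add ((hasDerivAt_id s).const_mul m)).congr_deriv (by simp)
    · simpa only [← eq_neg_iff_add_eq_zero] using hk
  have hneg : {s ∈ Ioo (0 : ℝ) 1 | ser (g a b c d) s - m * s = -e} =
      {s ∈ Ioo (0 : ℝ) 1 | ser (g a b c d) s + -m * s = -e} := by
    simp only [neg_mul, ← sub_eq_add_neg]
  rw [hneg]
  have h4 := hlev m e 4 (h1 _)
  have h4' := hlev (-m) (-e) 4 (h1 _)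
  rcases not_and_or.1 hnot with h2 | h2
  · exact (add_le_add (hlev m e 3 (enat_le_of_not_succ_le h2)) h4').trans (by norm_num)
  · exact (add_le_add h4 (hlev (-m) (-e) 3
      (by rw [neg_neg]; exact enat_le_of_not_succ_le h2))).trans (by norm_num)

/-! ### The Melnikov functions -/

variable {α₀ α₁ β₀ β₁ γ₀ γ₁ : ℝ}

lemma M2star_eq_M2 :
    M2star α₀ α₁ β₀ β₁ γ₀ γ₁ = M2 α₀ α₁ (-β₀) (-β₁) γ₀ γ₁ := by
  funext h
  simp only [M2, M2star]
  ring

lemma M2_eq_zero_iff {h : ℝ} (hh : h ∈ Ioo (-(1 : ℝ) / 4) 0) : M2 α₀ α₁ β₀ β₁ γ₀ γ₁ h = 0 ↔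
    ser (g (α₀ - α₁ / 4) (α₁ / 4) (γ₀ - γ₁ / 4) (γ₁ / 4)) (1 + 4 * h) + β₁ / 4 * (1 + 4 * h) =
      -(β₀ - β₁ / 4) := by
  obtain ⟨K, P, Q, hK, hP, hQ, e0, e1, e2⟩ := exists_AbI hh
  rw [ser_g ⟨by linarith [hh.1], by linarith [hh.2]⟩ hP hQ, M2, e0, e1, e2,
    show (α₀ + α₁ * h) * (K * P) + (β₀ + β₁ * h) * K + (γ₀ + γ₁ * h) * (K * Q) =
      K * ((α₀ + α₁ * h) * P + (β₀ + β₁ * h) + (γ₀ + γ₁ * h) * Q) by ring,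
    mul_eq_zero_iff_left hK.ne']
  constructor <;> intro h <;> linarith

lemma encard_M2_le : {h ∈ Ioo (-(1 : ℝ) / 4) 0 | M2 α₀ α₁ β₀ β₁ γ₀ γ₁ h = 0}.encard ≤
    {s ∈ Ioo (0 : ℝ) 1 | ser (g (α₀ - α₁ / 4) (α₁ / 4) (γ₀ - γ₁ / 4) (γ₁ / 4)) s + β₁ / 4 * s =
      -(β₀ - β₁ / 4)}.encard := by
  refine Set.encard_le_encard_of_injOn (f := fun h => 1 + 4 * h) ?_ ?_
  · rintro h ⟨hh, h0⟩
    exact ⟨⟨by linarith [hh.1], by linarith [hh.2]⟩, (M2_eq_zero_iff hh).1 h0⟩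
  · intro x _ y _ hxy
    have : 1 + 4 * x = 1 + 4 * y := hxy
    linarith

/-- Without `α` and `γ`, the Melnikov function is a nonzero affine multiple of `I₁`. -/
lemma encard_M2_le_one (hβ : ¬ (β₀ = 0 ∧ β₁ = 0)) :
    {h ∈ Ioo (-(1 : ℝ) / 4) 0 | M2 0 0 β₀ β₁ 0 0 h = 0}.encard ≤ 1 := by
  have key : ∀ h ∈ Ioo (-(1 : ℝ) / 4) 0, M2 0 0 β₀ β₁ 0 0 h = 0 → β₀ + β₁ * h = 0 := by
    intro h hh h0
    obtain ⟨K, P, Q, hK, -, -, -, e1, -⟩ := exists_AbI hh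
    simp only [M2, e1, zero_mul, zero_add, add_zero] at h0
    exact (mul_eq_zero.1 h0).resolve_right hK.ne'
  rw [Set.encard_le_one_iff]
  rintro x y ⟨hx, hx0⟩ ⟨hy, hy0⟩
  have h1 := key x hx hx0
  have h2 := key y hy hy0
  have h3 : β₁ * (x - y) = 0 := by linarith
  rcases mul_eq_zero.1 h3 with h | h
  · exact absurd ⟨by rw [h] at h1; linarith, h⟩ hβ
  · linarith

end Duffing

/-- Total zero counts of `M₂` and `M₂*` in `(−1/4, 0)`: at most 9 in general,
at most 7 if `β₁ = 0`, and at most 6 (with `M₂ = M₂*` having at most 3 zeros)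
if `β₀ = β₁ = 0`. -/
theorem simultaneous_zeros (α₀ α₁ β₀ β₁ γ₀ γ₁ : ℝ)
    (hne : ¬(α₀ = 0 ∧ α₁ = 0 ∧ β₀ = 0 ∧ β₁ = 0 ∧ γ₀ = 0 ∧ γ₁ = 0)) :
    ({h ∈ Set.Ioo (-(1:ℝ)/4) 0 | M2 α₀ α₁ β₀ β₁ γ₀ γ₁ h = 0}.encard +
      {h ∈ Set.Ioo (-(1:ℝ)/4) 0 | M2star α₀ α₁ β₀ β₁ γ₀ γ₁ h = 0}.encard ≤ 9) ∧
    (β₁ = 0 →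
      {h ∈ Set.Ioo (-(1:ℝ)/4) 0 | M2 α₀ α₁ β₀ β₁ γ₀ γ₁ h = 0}.encard +
        {h ∈ Set.Ioo (-(1:ℝ)/4) 0 | M2star α₀ α₁ β₀ β₁ γ₀ γ₁ h = 0}.encard ≤ 7) ∧
    (β₀ = 0 → β₁ = 0 →
      M2 α₀ α₁ β₀ β₁ γ₀ γ₁ = M2star α₀ α₁ β₀ β₁ γ₀ γ₁ ∧
      {h ∈ Set.Ioo (-(1:ℝ)/4) 0 | M2 α₀ α₁ β₀ β₁ γ₀ γ₁ h = 0}.encard ≤ 3 ∧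
      {h ∈ Set.Ioo (-(1:ℝ)/4) 0 | M2 α₀ α₁ β₀ β₁ γ₀ γ₁ h = 0}.encard +
        {h ∈ Set.Ioo (-(1:ℝ)/4) 0 | M2star α₀ α₁ β₀ β₁ γ₀ γ₁ h = 0}.encard ≤ 6) := by
  by_cases hαγ : α₀ = 0 ∧ α₁ = 0 ∧ γ₀ = 0 ∧ γ₁ = 0
  · obtain ⟨rfl, rfl, rfl, rfl⟩ := hαγ
    have hβ : ¬ (β₀ = 0 ∧ β₁ = 0) := fun h => hne ⟨rfl, rfl, h.1, h.2, rfl, rfl⟩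
    rw [Duffing.M2star_eq_M2]
    have h2 := add_le_add (Duffing.encard_M2_le_one hβ)
      (Duffing.encard_M2_le_one (β₀ := -β₀) (β₁ := -β₁) (by simpa using hβ))
    exact ⟨h2.trans (by norm_num), fun _ => h2.trans (by norm_num), fun h h' => absurd ⟨h, h'⟩ hβ⟩
  have hG : ¬ (α₀ - α₁ / 4 = 0 ∧ α₁ / 4 = 0 ∧ γ₀ - γ₁ / 4 = 0 ∧ γ₁ / 4 = 0) := by
    rintro ⟨h1, h2, h3, h4⟩
    exact hαγ ⟨by linarith, by linarith, by linarith, by linarith⟩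
  have hM := Duffing.encard_M2_le (α₀ := α₀) (α₁ := α₁) (β₀ := β₀) (β₁ := β₁) (γ₀ := γ₀) (γ₁ := γ₁)
  have hM' := Duffing.encard_M2_le (α₀ := α₀) (α₁ := α₁) (β₀ := -β₀) (β₁ := -β₁) (γ₀ := γ₀)
    (γ₁ := γ₁)
  rw [Duffing.M2star_eq_M2]
  refine ⟨?_, ?_, ?_⟩
  · refine le_trans (add_le_add hM (hM'.trans (Set.encard_le_encard ?_)))
      (Duffing.encard_linear_levels_le_nine hG (-(β₀ - β₁ / 4)) (β₁ / 4))
    rintro s ⟨hs, hs0⟩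
    exact ⟨hs, by linarith⟩
  · rintro rfl
    refine le_trans (add_le_add (hM.trans (Set.encard_le_encard ?_))
      (hM'.trans (Set.encard_le_encard ?_))) (Duffing.encard_levels_le_seven hG (-β₀)) <;>
    · rintro s ⟨hs, hs0⟩
      exact ⟨hs, by linarith⟩
  · rintro rfl rfl
    have h3 : {h ∈ Set.Ioo (-(1:ℝ)/4) 0 | M2 α₀ α₁ 0 0 γ₀ γ₁ h = 0}.encard ≤ 3 := by
      refine hM.trans (le_trans (Set.encard_le_encard ?_) (Duffing.zerosLE_g hG))
      rintro s ⟨hs, hs0⟩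
      exact ⟨hs, by linarith⟩
    rw [neg_zero]
    exact ⟨rfl, h3, (add_le_add h3 h3).trans (by norm_num)⟩
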